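/- Let I ⊆ Δ and let Φ' be a subsystem of Φ. Then W_I ∩ W(Φ') = W(Φ_I ∩ Φ'). -/

import Mathlib

open scoped RealInnerProductSpace
open Classical

noncomputable section

namespace JantzenGVM

variable {V : Type*} [NormedAddCommGroup V] [InnerProductSpace ℝ V] [FiniteDimensional ℝ V]

/-- The coroot `α^∨ = 2α/⟨α,α⟩` of a vector `α` (junk value `0` when `α = 0`). -/
def coroot (α : V) : V := (2 / ⟪α, α⟫) • α

/-- The linear functional `v ↦ ⟨v, α^∨⟩`. -/
def corootForm (α : V) : V →ₗ[ℝ] ℝ where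
  toFun v := ⟪v, coroot α⟫
  map_add' x y := by simp [inner_add_left]
  map_smul' c x := by simp [inner_smul_left]

lemma corootForm_self {α : V} (h : ⟪α, α⟫ ≠ 0) : corootForm α α = 2 := by
  simp only [corootForm, coroot, LinearMap.coe_mk, AddHom.coe_mk, real_inner_smul_right]
  field_simp

/-- The reflection `s_α` as a linear automorphism of `V` (the identity when `⟨α,α⟩ = 0`). -/
def reflV (α : V) : V ≃ₗ[ℝ] V :=
  if h : ⟪α, α⟫ = 0 then LinearEquiv.refl ℝ V
  else Module.reflection (corootForm_self h)

/-- `h* = ℂ ⊗ V`, realized as the space of real-linear functionals `V → ℂ` via the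
inner product; an element `λ` pairs with a root `α` by `⟨λ, α⟩ = λ α` and with the
coroot by `⟨λ, α^∨⟩ = λ (coroot α)`. -/
abbrev HStar (V : Type*) [NormedAddCommGroup V] [InnerProductSpace ℝ V] := V →ₗ[ℝ] ℂ

/-- The canonical embedding of `V` into `h*`. -/
def emb (α : V) : HStar V where
  toFun v := (⟪α, v⟫ : ℂ)
  map_add' x y := by simp [inner_add_right]
  map_smul' c x := by simp [inner_smul_right, Complex.real_smul]

/-- The action of a linear automorphism `w` of `V` on `h*`: `(w • λ)(v) = λ(w⁻¹ v)`. -/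
def wAct (w : V ≃ₗ[ℝ] V) (l : HStar V) : HStar V := l ∘ₗ (w.symm : V →ₗ[ℝ] V)

/-- The reflection `s_β λ = λ - ⟨λ, β^∨⟩ β` acting on `h*`. -/
def sRefl (β : V) (l : HStar V) : HStar V := l - l (coroot β) • emb β

/-- The group generated by the reflections in the elements of `Φ'`. -/
def weyl (Φ' : Set V) : Subgroup (V ≃ₗ[ℝ] V) :=
  Subgroup.closure {w | ∃ α ∈ Φ', w = reflV α}

/-- A finite, reduced, crystallographic root system spanning the Euclidean space `V`,
together with a choice of positive system and the corresponding simple system. -/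
structure RootSys (V : Type*) [NormedAddCommGroup V] [InnerProductSpace ℝ V]
    [FiniteDimensional ℝ V] where
  Φ : Finset V
  pos : Finset V
  Δ : Finset V
  ne_zero : ∀ α ∈ Φ, α ≠ (0 : V)
  span_eq_top : Submodule.span ℝ (Φ : Set V) = ⊤
  reduced : ∀ α ∈ Φ, ∀ c : ℝ, c • α ∈ Φ → c = 1 ∨ c = -1
  refl_mem : ∀ α ∈ Φ, ∀ β ∈ Φ, reflV α β ∈ Φ
  crystallographic : ∀ α ∈ Φ, ∀ β ∈ Φ, ∃ n : ℤ, ⟪β, coroot α⟫ = (n : ℝ)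
  pos_subset : pos ⊆ Φ
  mem_pos_or : ∀ α ∈ Φ, α ∈ pos ∨ -α ∈ pos
  not_both : ∀ α ∈ pos, -α ∉ pos
  simple_subset : Δ ⊆ pos
  simple_indep : LinearIndependent ℝ (fun x : {a : V // a ∈ Δ} => x.1)
  simple_gen : ∀ β ∈ pos, ∃ c : V → ℝ, (∀ α ∈ Δ, 0 ≤ c α) ∧ β = ∑ α ∈ Δ, c α • α

/-- A subsystem of the root system: a subset of `Φ` closed under its own reflections. -/
def IsSubsystem (S : RootSys V) (Φ' : Set V) : Prop :=
  Φ' ⊆ (S.Φ : Set V) ∧ ∀ α ∈ Φ', ∀ β ∈ Φ', reflV α β ∈ Φ'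

/-- The length of `w`, i.e. the number of positive roots sent to negative roots
(this equals the Coxeter length for elements of the Weyl group). -/
def len (S : RootSys V) (w : V ≃ₗ[ℝ] V) : ℕ :=
  {β ∈ (S.pos : Set V) | w β ∉ (S.pos : Set V)}.ncard

/-- `Φ_I = ℤI ∩ Φ`, the subsystem generated by a subset `I` of the simple roots. -/
def PhiI (S : RootSys V) (I : Finset V) : Set V :=
  {α ∈ (S.Φ : Set V) | α ∈ Submodule.span ℤ (I : Set V)}

/-- `z` is a positive integer. -/
def IsPosInt (z : ℂ) : Prop := ∃ n : ℤ, 0 < n ∧ z = (n : ℂ)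

/-- `z` is an integer. -/
def IsInt (z : ℂ) : Prop := ∃ n : ℤ, z = (n : ℂ)

/-- `Λ_I⁺ = {λ ∈ h* : ⟨λ, α^∨⟩ ∈ ℤ_{>0} for all α ∈ I}`. -/
def LambdaP (I : Set V) : Set (HStar V) :=
  {l | ∀ α ∈ I, IsPosInt (l (coroot α))}

/-- `Λ⁺(Φ'', Φ') = {ν ∈ ℂΦ' : ⟨ν, α^∨⟩ ∈ ℤ_{>0} for all α ∈ Φ'' ∩ Φ⁺}`. -/
def LambdaPSub (S : RootSys V) (Φ'' Φ' : Set V) : Set (HStar V) :=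
  {l | l ∈ Submodule.span ℂ (emb '' Φ') ∧
       ∀ α ∈ Φ'' ∩ (S.pos : Set V), IsPosInt (l (coroot α))}

/-- `λ` is `Φ''`-regular: `⟨λ, α⟩ ≠ 0` for all `α ∈ Φ''`. -/
def IsRegularOn (Φ'' : Set V) (l : HStar V) : Prop := ∀ α ∈ Φ'', l α ≠ 0

/-- `Ψ⁺(λ, Φ'', Φ') = {β ∈ (Φ' ∩ Φ⁺) \ Φ'' : ⟨λ, β^∨⟩ ∈ ℤ_{>0}}`. -/
def PsiP (S : RootSys V) (Φ'' Φ' : Set V) (l : HStar V) : Set V :=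
  {β | β ∈ Φ' ∩ (S.pos : Set V) ∧ β ∉ Φ'' ∧ IsPosInt (l (coroot β))}

/-- `Ψ⁺⁺(λ, Φ'', Φ') = {β ∈ Ψ⁺(λ, Φ'', Φ') : s_β λ is Φ''-regular}`. -/
def PsiPP (S : RootSys V) (Φ'' Φ' : Set V) (l : HStar V) : Set V :=
  {β ∈ PsiP S Φ'' Φ' l | ∀ α ∈ Φ'', (sRefl β l) α ≠ 0}

/-- The sign function: `sgn(λ, μ) = (-1)^{ℓ(w)}` if `λ, μ` are `Φ''`-regular and
`μ = wλ` for some `w ∈ W(Φ'')`, and `0` otherwise. -/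
def sgnW (S : RootSys V) (Φ'' : Set V) (l m : HStar V) : ℤ :=
  if h : IsRegularOn Φ'' l ∧ IsRegularOn Φ'' m ∧ ∃ w, w ∈ weyl Φ'' ∧ m = wAct w l
  then (-1) ^ len S h.2.2.choose else 0

/-- The Jantzen coefficient `c(λ, μ, Φ'', Φ') = Σ_{β ∈ Ψ⁺⁺(λ,Φ'',Φ')} sgn(s_β λ, μ)`. -/
def jc (S : RootSys V) (Φ'' Φ' : Set V) (l m : HStar V) : ℤ :=
  ∑ᶠ β ∈ PsiPP S Φ'' Φ' l, sgnW S Φ'' (sRefl β l) m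

/-- The symmetrized Jantzen coefficient `c̃(λ, μ, Φ'', Φ')`. -/
def jcSym (S : RootSys V) (Φ'' Φ' : Set V) (l m : HStar V) : ℤ :=
  jc S Φ'' Φ' l m + jc S Φ'' Φ' m l

/-- `θ(λ) = Σ_{w ∈ W_I} (-1)^{ℓ(w)} e^{wλ}` in the free `ℤ`-module on `h*`. -/
def theta (S : RootSys V) (I : Finset V) (l : HStar V) : HStar V →₀ ℤ :=
  ∑ᶠ w ∈ (weyl (PhiI S I) : Set (V ≃ₗ[ℝ] V)),
    Finsupp.single (wAct w l) ((-1) ^ len S w)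

/-- `Φ_λ = {α ∈ Φ : ⟨λ, α⟩ = 0}`. -/
def singSet (S : RootSys V) (l : HStar V) : Set V :=
  {α ∈ (S.Φ : Set V) | l α = 0}

/-- `Φ_{[λ]} = {α ∈ Φ : ⟨λ, α^∨⟩ ∈ ℤ}`. -/
def integralSet (S : RootSys V) (l : HStar V) : Set V :=
  {α ∈ (S.Φ : Set V) | IsInt (l (coroot α))}

/-- `(ℚ A) ∩ Φ`, the intersection of the rational span of `A` with `Φ`.
Taking `A = Φ_I ∪ {β}` gives `Φ_{β,1}`; taking `A = Φ_λ ∪ {β}` gives `Φ_{β,2}`. -/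
def ratSpanRoots (S : RootSys V) (A : Set V) : Set V :=
  {γ ∈ (S.Φ : Set V) | ∃ (t : Finset V) (c : V → ℚ),
    (t : Set V) ⊆ A ∧ γ = ∑ α ∈ t, (c α : ℝ) • α}

/-- `Φ_{β,0}`, the irreducible component of `Φ` containing `β`. -/
def component (S : RootSys V) (β : V) : Set V :=
  {γ ∈ (S.Φ : Set V) |
    Relation.ReflTransGen
      (fun x y => x ∈ (S.Φ : Set V) ∧ y ∈ (S.Φ : Set V) ∧ ⟪x, y⟫ ≠ 0) β γ}

/-- `λ|_{Φ'}`: the unique element of `ℂΦ'` with `⟨λ|_{Φ'}, α^∨⟩ = ⟨λ, α^∨⟩`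
for all `α ∈ Φ'`. -/
def restrictW (Φ' : Set V) (l : HStar V) : HStar V :=
  letI : Nonempty (HStar V) := ⟨0⟩
  Classical.epsilon fun m =>
    m ∈ Submodule.span ℂ (emb '' Φ') ∧ ∀ α ∈ Φ', m (coroot α) = l (coroot α)

/-- `ᴵWᴶ = {w ∈ W : ℓ(uwv) = ℓ(u) + ℓ(w) + ℓ(v) for all u ∈ W_I, v ∈ W_J}`. -/
def doubleCoset (S : RootSys V) (I J : Finset V) : Set (V ≃ₗ[ℝ] V) :=
  {w | w ∈ weyl (S.Φ : Set V) ∧ ∀ u ∈ weyl (PhiI S I), ∀ v ∈ weyl (PhiI S J),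
    len S (u * w * v) = len S u + len S w + len S v}

/-- The fundamental weight `ϖ_j` relative to an enumeration `e` of the simple roots:
the unique element of `h*` with `⟨ϖ_j, α_k^∨⟩ = δ_{jk}`. -/
def fundWeight {n : ℕ} (e : Fin n → V) (j : Fin n) : HStar V :=
  letI : Nonempty (HStar V) := ⟨0⟩
  Classical.epsilon fun m => ∀ k : Fin n, m (coroot (e k)) = if k = j then 1 else 0

/-- The labels of the irreducible Dynkin types. -/
inductive LieType | A | B | C | D | E | F | G
deriving DecidableEq

/-- The Cartan matrix of type `A_n` (1-based indices): entry `(i,j)` is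
`⟨α_i, α_j^∨⟩`. -/
def cartanA (i j : ℕ) : ℤ :=
  if i = j then 2 else if i + 1 = j ∨ j + 1 = i then -1 else 0

/-- The Cartan matrices of the irreducible types in the standard (Bourbaki/Humphreys)
numbering of the Dynkin diagram: `cartanEntry t n i j = ⟨α_i, α_j^∨⟩` (1-based). -/
def cartanEntry : LieType → ℕ → ℕ → ℕ → ℤ
  | .A, _, i, j => cartanA i j
  | .B, n, i, j => if i + 1 = n ∧ j = n then -2 else cartanA i j
  | .C, n, i, j => if i = n ∧ j + 1 = n then -2 else cartanA i j
  | .D, n, i, j =>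
      if i = j then 2
      else if (i + 2 = n ∧ j = n) ∨ (i = n ∧ j + 2 = n) then -1
      else if (i + 1 = n ∧ j = n) ∨ (i = n ∧ j + 1 = n) then 0
      else cartanA i j
  | .E, _, i, j =>
      if i = j then 2
      else if (i = 1 ∧ j = 3) ∨ (i = 3 ∧ j = 1) ∨ (i = 2 ∧ j = 4) ∨ (i = 4 ∧ j = 2) then -1
      else if (i = 1 ∧ j = 2) ∨ (i = 2 ∧ j = 1) ∨ (i = 2 ∧ j = 3) ∨ (i = 3 ∧ j = 2) then 0
      else cartanA i j
  | .F, _, i, j => if i = 2 ∧ j = 3 then -2 else cartanA i j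
  | .G, _, i, j => if i = 2 ∧ j = 1 then -3 else cartanA i j

/-- The standard basis vector `e_k` (1-based index, junk `0` outside `1 ≤ k ≤ n`). -/
def stdE (n k : ℕ) : EuclideanSpace ℝ (Fin n) :=
  if h : 1 ≤ k ∧ k ≤ n then EuclideanSpace.single ⟨k - 1, by omega⟩ 1 else 0

/-- The labels `B`, `C`, `D` of the classical non-`A` types. -/
inductive BCD | B | C | D
deriving DecidableEq

/-- The root set of `B_n` / `C_n` / `D_n` in the standard realization. -/
def bcdRoots (t : BCD) (n : ℕ) : Set (EuclideanSpace ℝ (Fin n)) :=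
  {v | (∃ i j : ℕ, 1 ≤ i ∧ i < j ∧ j ≤ n ∧
          (v = stdE n i - stdE n j ∨ v = -(stdE n i - stdE n j) ∨
           v = stdE n i + stdE n j ∨ v = -(stdE n i + stdE n j))) ∨
       (match t with
        | .B => ∃ i : ℕ, 1 ≤ i ∧ i ≤ n ∧ (v = stdE n i ∨ v = -stdE n i)
        | .C => ∃ i : ℕ, 1 ≤ i ∧ i ≤ n ∧ (v = (2:ℝ) • stdE n i ∨ v = -((2:ℝ) • stdE n i))
        | .D => False)}

/-- The positive roots of `B_n` / `C_n` / `D_n` in the standard realization. -/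
def bcdPos (t : BCD) (n : ℕ) : Set (EuclideanSpace ℝ (Fin n)) :=
  {v | (∃ i j : ℕ, 1 ≤ i ∧ i < j ∧ j ≤ n ∧
          (v = stdE n i - stdE n j ∨ v = stdE n i + stdE n j)) ∨
       (match t with
        | .B => ∃ i : ℕ, 1 ≤ i ∧ i ≤ n ∧ v = stdE n i
        | .C => ∃ i : ℕ, 1 ≤ i ∧ i ≤ n ∧ v = (2:ℝ) • stdE n i
        | .D => False)}

/-- The simple roots of `B_n` / `C_n` / `D_n` in the standard realization. -/
def bcdSimple (t : BCD) (n : ℕ) : Set (EuclideanSpace ℝ (Fin n)) :=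
  {v | (∃ i : ℕ, 1 ≤ i ∧ i < n ∧ v = stdE n i - stdE n (i + 1)) ∨
       (match t with
        | .B => v = stdE n n
        | .C => v = (2:ℝ) • stdE n n
        | .D => v = stdE n (n - 1) + stdE n n)}

/-- The simple root `α_k` of `B_n` / `C_n` / `D_n` (1-based index `k`). -/
def bcdAlpha (t : BCD) (n k : ℕ) : EuclideanSpace ℝ (Fin n) :=
  if k < n then stdE n k - stdE n (k + 1)
  else match t with
  | .B => stdE n n
  | .C => (2:ℝ) • stdE n n
  | .D => stdE n (n - 1) + stdE n n


/-! ### Auxiliary lemmas -/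

lemma aux_reflV_apply (α x : V) : reflV α x = x - (⟪x, coroot α⟫ : ℝ) • α := by
  unfold reflV
  split_ifs with h
  · have : α = 0 := inner_self_eq_zero.mp h
    simp [this]
  · rw [Module.reflection_apply]
    rfl

lemma aux_reflV_apply_eq (α x : V) :
    reflV α x = x - ((2 / ⟪α, α⟫) * ⟪x, α⟫ : ℝ) • α := by
  rw [aux_reflV_apply, coroot, real_inner_smul_right]

lemma aux_reflV_self (α : V) : reflV α α = -α := by
  rw [aux_reflV_apply_eq]
  by_cases h : α = 0
  · simp [h]
  · have h' : (⟪α, α⟫ : ℝ) ≠ 0 := fun h0 => h (inner_self_eq_zero.mp h0)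
    rw [div_mul_cancel₀ _ h', two_smul]
    abel

lemma aux_reflV_inner (α x y : V) : (⟪reflV α x, reflV α y⟫ : ℝ) = ⟪x, y⟫ := by
  by_cases h : α = 0
  · simp [aux_reflV_apply_eq, h]
  · have h' : (⟪α, α⟫ : ℝ) ≠ 0 := fun h0 => h (inner_self_eq_zero.mp h0)
    simp only [aux_reflV_apply_eq, inner_sub_left, inner_sub_right, real_inner_smul_left,
      real_inner_smul_right]
    rw [real_inner_comm α y]
    field_simp
    ring

lemma aux_reflV_invol (α x : V) : reflV α (reflV α x) = x := by
  conv_lhs => rw [aux_reflV_apply_eq α x]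
  rw [map_sub, map_smul, aux_reflV_self, aux_reflV_apply_eq α x]
  simp

lemma aux_reflV_mul_self (α : V) : reflV α * reflV α = 1 := by
  ext x
  exact aux_reflV_invol α x

lemma aux_conj (g : V ≃ₗ[ℝ] V) (hg : ∀ x y : V, (⟪g x, g y⟫ : ℝ) = ⟪x, y⟫) (β : V) :
    reflV (g β) * g = g * reflV β := by
  ext x
  simp only [LinearEquiv.mul_apply, aux_reflV_apply_eq, hg, map_sub, map_smul]

lemma aux_span_pos (f : V →ₗ[ℝ] ℝ) (T : Set V) (hT : ∀ x ∈ T, 0 < f x) (z : V)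
    (hz : z ∈ Submodule.span NNReal T) : z = 0 ∨ 0 < f z := by
  induction hz using Submodule.span_induction with
  | mem x hx => exact Or.inr (hT x hx)
  | zero => exact Or.inl rfl
  | add x y _ _ hx hy =>
    rcases hx with rfl | hx
    · simpa using hy
    · rcases hy with rfl | hy
      · right; simpa using hx
      · right; rw [map_add]; exact add_pos hx hy
  | smul a x _ hx =>
    rcases hx with rfl | hx
    · left; simp
    · rcases eq_or_ne a 0 with rfl | ha
      · left; simp
      · right
        rw [NNReal.smul_def, map_smul, smul_eq_mul]
        exact mul_pos (by positivity) hx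

/-- `M` is an irredundant set of generators of the cone of positive elements of `Φ'`. -/
structure AuxBase (S : RootSys V) (Φ' : Set V) (M : Finset V) : Prop where
  sub : ∀ α ∈ M, α ∈ Φ' ∧ α ∈ S.pos
  gen : ∀ β ∈ Φ', β ∈ S.pos → β ∈ Submodule.span NNReal (M : Set V)
  irred : ∀ α ∈ M, α ∉ Submodule.span NNReal ((M.erase α : Finset V) : Set V)

lemma aux_simple_pos {S : RootSys V} {Φ' : Set V} (hsub : IsSubsystem S Φ') {M : Finset V}
    (hM : AuxBase S Φ' M) (ρ : V →ₗ[ℝ] ℝ) (hρ : ∀ β ∈ S.pos, 0 < ρ β)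
    {α γ : V} (hα : α ∈ M) (hγ : γ ∈ Φ') (hγp : γ ∈ S.pos) (hne : γ ≠ α) :
    reflV α γ ∈ S.pos := by
  by_contra hcon
  have hαΦ := (hM.sub α hα).1
  have hαp := (hM.sub α hα).2
  have hrΦ : reflV α γ ∈ Φ' := hsub.2 α hαΦ γ hγ
  have hnp : -reflV α γ ∈ S.pos := (S.mem_pos_or _ (hsub.1 hrΦ)).resolve_left hcon
  have hnΦ : -reflV α γ ∈ Φ' := by
    have := hsub.2 _ hrΦ _ hrΦ
    rwa [aux_reflV_self] at this
  have h1 := hM.gen _ hγ hγp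
  have h2 := hM.gen _ hnΦ hnp
  have hins : (M : Set V) = insert α ((M.erase α : Finset V) : Set V) := by
    rw [← Finset.coe_insert, Finset.insert_erase hα]
  rw [hins, Submodule.mem_span_insert] at h1 h2
  obtain ⟨a, z, hz, h1⟩ := h1
  obtain ⟨b, z', hz', h2⟩ := h2
  rw [NNReal.smul_def] at h1 h2
  rw [aux_reflV_apply] at h2
  set c : ℝ := ⟪γ, coroot α⟫ with hc
  have hsum : z + z' = (c - a - b) • α := by
    have e1 : z = γ - (a : ℝ) • α := by rw [h1]; abel
    have e2 : z' = -(γ - c • α) - (b : ℝ) • α := by rw [h2]; abel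
    rw [e1, e2]; module
  have hT : ∀ x ∈ ((M.erase α : Finset V) : Set V), 0 < ρ x := by
    intro x hx
    exact hρ _ (hM.sub x (Finset.mem_of_mem_erase hx)).2
  by_cases hpos : 0 < c - a - b
  · apply hM.irred α hα
    have h3 : Real.toNNReal (c - a - b)⁻¹ • (z + z') = α := by
      rw [NNReal.smul_def, hsum, Real.coe_toNNReal _ (inv_pos.mpr hpos).le, smul_smul,
        inv_mul_cancel₀ hpos.ne', one_smul]
    have h4 := Submodule.smul_mem _ (Real.toNNReal (c - a - b)⁻¹) (Submodule.add_mem _ hz hz')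
    rwa [h3] at h4
  · have hz0 : z = 0 := by
      rcases aux_span_pos ρ _ hT z hz with h | h
      · exact h
      · exfalso
        have e := congrArg ρ hsum
        rw [map_add, map_smul, smul_eq_mul] at e
        have hz'0 : 0 ≤ ρ z' := by
          rcases aux_span_pos ρ _ hT z' hz' with h | h
          · simp [h]
          · exact h.le
        have := hρ α hαp
        nlinarith
    rw [hz0, add_zero] at h1
    have hmem : (a : ℝ) • α ∈ S.Φ := h1 ▸ S.pos_subset hγp
    rcases S.reduced α (S.pos_subset hαp) a hmem with h | h
    · apply hne; rw [h1, h, one_smul]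
    · have := a.2
      have h' : (a : ℝ) = -1 := h
      have : (0:ℝ) ≤ a := a.2
      linarith

lemma aux_exists_acute {S : RootSys V} {Φ' : Set V} {M : Finset V}
    (hM : AuxBase S Φ' M) {β : V} (hβ : β ∈ Φ') (hβp : β ∈ S.pos) :
    ∃ α ∈ M, (0 : ℝ) < ⟪β, α⟫ := by
  by_contra! hcon
  have key : ∀ x ∈ Submodule.span NNReal (M : Set V), (⟪β, x⟫ : ℝ) ≤ 0 := by
    intro x hx
    induction hx using Submodule.span_induction with
    | mem x hx => exact hcon x hx
    | zero => simp
    | add x y _ _ hx hy => rw [inner_add_right]; linarith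
    | smul a x _ hx =>
      rw [NNReal.smul_def, real_inner_smul_right]
      exact mul_nonpos_of_nonneg_of_nonpos a.2 hx
  have h1 := key β (hM.gen β hβ hβp)
  have h2 : β = 0 := by
    rw [← inner_self_eq_zero (𝕜 := ℝ)]
    exact le_antisymm h1 real_inner_self_nonneg
  exact S.ne_zero β (S.pos_subset hβp) h2

lemma aux_induct {S : RootSys V} {Φ' : Set V} (hsub : IsSubsystem S Φ') {M : Finset V}
    (hM : AuxBase S Φ' M) (ρ : V →ₗ[ℝ] ℝ) (hρ : ∀ β ∈ S.pos, 0 < ρ β)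
    (Q : V → Prop) (hbase : ∀ α ∈ M, Q α)
    (hstep : ∀ α ∈ M, ∀ β ∈ Φ', β ∈ S.pos → (0 : ℝ) < ⟪β, coroot α⟫ →
      reflV α β ∈ Φ' → reflV α β ∈ S.pos → Q (reflV α β) → Q β) :
    ∀ β ∈ Φ', β ∈ S.pos → Q β := by
  by_contra! hcon
  obtain ⟨β₀, hβ₀, hβ₀p, hQ₀⟩ := hcon
  have hne : (S.pos.filter (fun β => β ∈ Φ' ∧ ¬ Q β)).Nonempty :=
    ⟨β₀, by simp [hβ₀, hβ₀p, hQ₀]⟩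
  obtain ⟨β, hβ, hmin⟩ := Finset.exists_min_image _ ρ hne
  rw [Finset.mem_filter] at hβ
  obtain ⟨hβp, hβΦ, hQ⟩ := hβ
  obtain ⟨α, hα, hac⟩ := aux_exists_acute hM hβΦ hβp
  have hneq : β ≠ α := fun h => hQ (h ▸ hbase α hα)
  have hp := aux_simple_pos hsub hM ρ hρ hα hβΦ hβp hneq
  have hΦ := hsub.2 α (hM.sub α hα).1 β hβΦ
  have hα0 : α ≠ 0 := S.ne_zero α (S.pos_subset (hM.sub α hα).2)
  have hc : (0 : ℝ) < ⟪β, coroot α⟫ := by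
    rw [coroot, real_inner_smul_right]
    have : (0:ℝ) < ⟪α, α⟫ := real_inner_self_pos.mpr hα0
    positivity
  have hQ' : ¬ Q (reflV α β) := fun h => hQ (hstep α hα β hβΦ hβp hc hΦ hp h)
  have := hmin (reflV α β) (by simp [hp, hΦ, hQ'])
  rw [aux_reflV_apply, map_sub, map_smul, smul_eq_mul] at this
  have h2 := mul_pos hc (hρ α (hM.sub α hα).2)
  linarith

lemma aux_exists_base (S : RootSys V) (Φ' : Set V) : ∃ M : Finset V, AuxBase S Φ' M := by
  let F : Finset (Finset V) := (S.pos.filter (· ∈ Φ')).powerset.filter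
    (fun M => ∀ β ∈ Φ', β ∈ S.pos → β ∈ Submodule.span NNReal (M : Set V))
  have hF : F.Nonempty := by
    refine ⟨S.pos.filter (· ∈ Φ'), ?_⟩
    simp only [F, Finset.mem_filter, Finset.mem_powerset, subset_refl, true_and]
    intro β h1 h2
    exact Submodule.subset_span (by simp [h1, h2])
  obtain ⟨M, hMF, hmin⟩ := Finset.exists_min_image F Finset.card hF
  have hMF' := hMF
  simp only [F, Finset.mem_filter, Finset.mem_powerset] at hMF'
  obtain ⟨hsubM, hgen⟩ := hMF'
  refine ⟨M, ⟨?_, hgen, ?_⟩⟩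
  · intro α hα
    have := hsubM hα
    simp only [Finset.mem_filter] at this
    exact ⟨this.2, this.1⟩
  · intro α hα hspan
    have hle : Submodule.span NNReal (M : Set V) ≤
        Submodule.span NNReal ((M.erase α : Finset V) : Set V) := by
      rw [Submodule.span_le]
      intro x hx
      by_cases hxa : x = α
      · rw [hxa]; exact hspan
      · exact Submodule.subset_span (by simpa [hxa] using hx)
    have hmem : M.erase α ∈ F := by
      simp only [F, Finset.mem_filter, Finset.mem_powerset]
      exact ⟨(Finset.erase_subset _ _).trans hsubM, fun β h1 h2 => hle (hgen β h1 h2)⟩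
    have := hmin _ hmem
    have h3 := Finset.card_erase_lt_of_mem hα
    omega

lemma aux_base_simple (S : RootSys V) : AuxBase S (S.Φ : Set V) S.Δ := by
  refine ⟨fun α hα => ⟨S.pos_subset (S.simple_subset hα), S.simple_subset hα⟩, ?_, ?_⟩
  · intro β _ hβ
    obtain ⟨c, hc, rfl⟩ := S.simple_gen β hβ
    refine Submodule.sum_mem _ fun α hα => ?_
    have : c α • α = (⟨c α, hc α hα⟩ : NNReal) • α := rfl
    rw [this]
    exact Submodule.smul_mem _ _ (Submodule.subset_span hα)
  · intro α hα hspan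
    have h1 : α ∈ Submodule.span ℝ ((S.Δ.erase α : Finset V) : Set V) :=
      Submodule.span_le_restrictScalars NNReal ℝ _ hspan
    have hli : LinearIndepOn ℝ id (S.Δ : Set V) := S.simple_indep
    have h2 := hli.notMem_span hα
    apply h2
    simpa using h1

lemma aux_functional (S : RootSys V) (g : V → ℝ) :
    ∃ f : V →ₗ[ℝ] ℝ, ∀ α ∈ S.Δ, f α = g α := by
  obtain ⟨f, hf⟩ := LinearMap.exists_extend
    ((Module.Basis.span S.simple_indep).constr ℝ (fun x => g x.1))
  refine ⟨f, fun α hα => ?_⟩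
  have h := congrArg (fun h => h (Module.Basis.span S.simple_indep ⟨α, hα⟩)) hf
  simp only [Module.Basis.constr_basis, LinearMap.comp_apply, Submodule.subtype_apply] at h
  rw [← h, Module.Basis.span_apply]

/-- Products of reflections. -/
def auxProd (L : List V) : V ≃ₗ[ℝ] V := (L.map reflV).prod

lemma auxProd_cons (a : V) (L : List V) : auxProd (a :: L) = reflV a * auxProd L := by
  simp [auxProd]

lemma auxProd_append (L L' : List V) : auxProd (L ++ L') = auxProd L * auxProd L' := by
  simp [auxProd]

lemma auxProd_inner (L : List V) (x y : V) : (⟪auxProd L x, auxProd L y⟫ : ℝ) = ⟪x, y⟫ := by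
  induction L with
  | nil => simp [auxProd]
  | cons a L ih => rw [auxProd_cons, LinearEquiv.mul_apply, LinearEquiv.mul_apply,
      aux_reflV_inner, ih]

lemma auxProd_inv (L : List V) : (auxProd L)⁻¹ = auxProd L.reverse := by
  induction L with
  | nil => simp [auxProd]
  | cons a L ih =>
    rw [auxProd_cons, List.reverse_cons, auxProd_append, ← ih, mul_inv_rev,
      inv_eq_of_mul_eq_one_left (aux_reflV_mul_self a)]
    simp [auxProd]

lemma auxProd_mem {S : RootSys V} {Φ' : Set V} (hsub : IsSubsystem S Φ') {M : Finset V}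
    (hM : AuxBase S Φ' M) (L : List V) (hL : ∀ a ∈ L, a ∈ M) (x : V) (hx : x ∈ Φ') :
    auxProd L x ∈ Φ' := by
  induction L with
  | nil => simpa [auxProd] using hx
  | cons a L ih =>
    rw [auxProd_cons, LinearEquiv.mul_apply]
    exact hsub.2 a (hM.sub a (hL a (by simp))).1 _ (ih fun b hb => hL b (by simp [hb]))

lemma aux_exists_word {S : RootSys V} {Φ' : Set V} (hsub : IsSubsystem S Φ') {M : Finset V}
    (hM : AuxBase S Φ' M) (ρ : V →ₗ[ℝ] ℝ) (hρ : ∀ β ∈ S.pos, 0 < ρ β)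
    (w : V ≃ₗ[ℝ] V) (hw : w ∈ weyl Φ') :
    ∃ L : List V, (∀ a ∈ L, a ∈ M) ∧ auxProd L = w := by
  have hpos := aux_induct hsub hM ρ hρ
    (fun β => ∃ L : List V, (∀ a ∈ L, a ∈ M) ∧ auxProd L = reflV β)
    (fun α hα => ⟨[α], by simpa using hα, by simp [auxProd]⟩)
    (by
      rintro α hα β hβ hβp - - - ⟨L, hL, hLp⟩
      refine ⟨α :: (L ++ [α]), ?_, ?_⟩
      · intro a ha
        simp only [List.mem_cons, List.mem_append, List.not_mem_nil, or_false] at ha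
        rcases ha with rfl | ha | rfl
        · exact hα
        · exact hL _ ha
        · exact hα
      · have e : auxProd [α] = reflV α := by simp [auxProd]
        rw [auxProd_cons, auxProd_append, hLp, e, aux_conj _ (aux_reflV_inner α), ← mul_assoc,
          aux_reflV_mul_self, one_mul])
  induction hw using Subgroup.closure_induction with
  | mem x hx =>
    obtain ⟨α, hα, rfl⟩ := hx
    rcases S.mem_pos_or α (hsub.1 hα) with h | h
    · exact hpos α hα h
    · have hn : -α ∈ Φ' := by
        have := hsub.2 _ hα _ hα
        rwa [aux_reflV_self] at this
      have e : reflV (-α) = reflV α := by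
        ext x
        simp [aux_reflV_apply_eq]
      rw [← e]
      exact hpos _ hn h
  | one => exact ⟨[], by simp, by simp [auxProd]⟩
  | mul x y _ _ hx hy =>
    obtain ⟨L, hL, rfl⟩ := hx
    obtain ⟨L', hL', rfl⟩ := hy
    refine ⟨L ++ L', ?_, auxProd_append _ _⟩
    intro a ha
    rcases List.mem_append.mp ha with h | h
    · exact hL a h
    · exact hL' a h
  | inv x _ hx =>
    obtain ⟨L, hL, rfl⟩ := hx
    exact ⟨L.reverse, fun a ha => hL a (List.mem_reverse.mp ha), (auxProd_inv L).symm⟩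

lemma aux_exchange {S : RootSys V} {Φ' : Set V} (hsub : IsSubsystem S Φ') {M : Finset V}
    (hM : AuxBase S Φ' M) (ρ : V →ₗ[ℝ] ℝ) (hρ : ∀ β ∈ S.pos, 0 < ρ β)
    {α : V} (hα : α ∈ M) (L : List V) (hL : ∀ a ∈ L, a ∈ M) (hneg : auxProd L α ∉ S.pos) :
    ∃ L' : List V, (∀ a ∈ L', a ∈ M) ∧ L'.length < L.length ∧
      auxProd L' = auxProd L * reflV α := by
  induction L with
  | nil =>
    exfalso
    apply hneg
    simpa [auxProd] using (hM.sub α hα).2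
  | cons b L ih =>
    have hb : b ∈ M := hL b (by simp)
    have hL1 : ∀ a ∈ L, a ∈ M := fun a ha => hL a (by simp [ha])
    by_cases h : auxProd L α ∈ S.pos
    · have heq : auxProd L α = b := by
        by_contra hne
        apply hneg
        rw [auxProd_cons, LinearEquiv.mul_apply]
        exact aux_simple_pos hsub hM ρ hρ hb
          (auxProd_mem hsub hM L hL1 α (hM.sub α hα).1) h hne
      refine ⟨L, hL1, by simp, ?_⟩
      have hc := aux_conj (auxProd L) (auxProd_inner L) α
      rw [heq] at hc
      rw [auxProd_cons, mul_assoc, ← hc, ← mul_assoc, aux_reflV_mul_self, one_mul]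
    · obtain ⟨L', h1, h2, h3⟩ := ih hL1 h
      refine ⟨b :: L', ?_, by simpa using h2, ?_⟩
      · intro a ha
        rcases List.mem_cons.mp ha with rfl | ha
        · exact hb
        · exact h1 a ha
      · rw [auxProd_cons, auxProd_cons, h3, mul_assoc]

lemma aux_stab {S : RootSys V} {Φ' : Set V} (hsub : IsSubsystem S Φ') {M : Finset V}
    (hM : AuxBase S Φ' M) (ρ : V →ₗ[ℝ] ℝ) (hρ : ∀ β ∈ S.pos, 0 < ρ β)
    (l : V →ₗ[ℝ] ℝ) (hl : ∀ β ∈ S.pos, 0 ≤ l β) (n : ℕ) :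
    ∀ L : List V, L.length = n → (∀ a ∈ L, a ∈ M) → (∀ x, l (auxProd L x) = l x) →
      auxProd L ∈ weyl {α ∈ Φ' | l α = 0} := by
  induction n using Nat.strong_induction_on with
  | _ n ih =>
    intro L hn hL hfix
    rcases List.eq_nil_or_concat L with rfl | ⟨L₁, α, rfl⟩
    · simpa [auxProd] using Subgroup.one_mem _
    · have hα : α ∈ M := hL α (by simp)
      have hL1 : ∀ a ∈ L₁, a ∈ M := fun a ha => hL a (by simp [ha])
      have hprod : auxProd (L₁ ++ [α]) = auxProd L₁ * reflV α := by
        rw [auxProd_append]; simp [auxProd]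
      have hlen : L₁.length + 1 = n := by simpa using hn
      simp only [List.concat_eq_append] at hfix hL ⊢
      rw [hprod] at hfix ⊢
      by_cases h : auxProd L₁ α ∈ S.pos
      · have h1 : 0 ≤ l (auxProd L₁ α) := hl _ h
        have h2 := hfix α
        rw [LinearEquiv.mul_apply, aux_reflV_self, map_neg, map_neg] at h2
        have h3 := hl α (hM.sub α hα).2
        have h0 : l α = 0 := by linarith
        refine Subgroup.mul_mem _ (ih _ (by omega) L₁ rfl hL1 ?_)
          (Subgroup.subset_closure ⟨α, ⟨(hM.sub α hα).1, h0⟩, rfl⟩)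
        intro x
        have h4 := hfix (reflV α x)
        rw [LinearEquiv.mul_apply, aux_reflV_invol] at h4
        rw [h4, aux_reflV_apply, map_sub, map_smul, h0, smul_zero, sub_zero]
      · obtain ⟨L', h1, h2, h3⟩ := aux_exchange hsub hM ρ hρ hα L₁ hL1 h
        rw [← h3] at hfix ⊢
        exact ih _ (by omega) L' rfl h1 hfix

lemma aux_PhiI (S : RootSys V) (I : Finset V) (ρ : V →ₗ[ℝ] ℝ) (hρ : ∀ β ∈ S.pos, 0 < ρ β)
    (l : V →ₗ[ℝ] ℝ) (hl : ∀ β ∈ S.pos, 0 ≤ l β) (hlI : ∀ α ∈ S.Δ, l α = 0 → α ∈ I)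
    (β : V) (hβ : β ∈ S.Φ) (h0 : l β = 0) : β ∈ PhiI S I := by
  have hsub : IsSubsystem S (S.Φ : Set V) := ⟨subset_rfl, S.refl_mem⟩
  have key := aux_induct hsub (aux_base_simple S) ρ hρ
    (fun β => l β = 0 → β ∈ Submodule.span ℤ (I : Set V))
    (fun α hα h => Submodule.subset_span (hlI α hα h))
    (by
      intro α hα β hβ hβp hc hr hrp ih h
      have h1 := hl _ hrp
      have h2 := hl α (S.simple_subset hα)
      rw [aux_reflV_apply] at h1 ih
      rw [map_sub, map_smul, smul_eq_mul, h] at h1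
      have hα0 : l α = 0 := by nlinarith
      obtain ⟨n, hn⟩ := S.crystallographic α (S.pos_subset (S.simple_subset hα)) β hβ
      have h3 := ih (by rw [map_sub, map_smul, hα0, h]; simp)
      rw [hn, Int.cast_smul_eq_zsmul] at h3
      have h4 : n • α ∈ Submodule.span ℤ (I : Set V) :=
        Submodule.smul_mem _ _ (Submodule.subset_span (hlI α hα hα0))
      simpa using Submodule.add_mem _ h3 h4)
  refine ⟨hβ, ?_⟩
  rcases S.mem_pos_or β hβ with h | h
  · exact key β hβ h h0
  · have := key (-β) (S.pos_subset h) h (by simp [h0])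
    simpa using Submodule.neg_mem _ this

/-- Lemma 4.13: for `I ⊆ Δ` and a subsystem `Φ'` of `Φ`,
`W_I ∩ W(Φ') = W(Φ_I ∩ Φ')`. -/
theorem statement_12 {V : Type*} [NormedAddCommGroup V] [InnerProductSpace ℝ V]
    [FiniteDimensional ℝ V]
    (S : RootSys V) (I : Finset V) (hI : I ⊆ S.Δ)
    (Φ' : Set V) (hsub : IsSubsystem S Φ') :
    weyl (PhiI S I) ⊓ weyl Φ' = weyl (PhiI S I ∩ Φ') := by
  apply le_antisymm
  · rintro w ⟨hwI, hw⟩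
    obtain ⟨ρ, hρΔ⟩ := aux_functional S (fun _ => 1)
    obtain ⟨l, hlΔ⟩ := aux_functional S (fun α => if α ∈ I then 0 else 1)
    have hρ : ∀ β ∈ S.pos, 0 < ρ β := by
      intro β hβ
      have hmem := (aux_base_simple S).gen β (S.pos_subset hβ) hβ
      rcases aux_span_pos ρ _ (fun x hx => by rw [hρΔ x hx]; exact one_pos) β hmem with h | h
      · exact absurd h (S.ne_zero β (S.pos_subset hβ))
      · exact h
    have hl : ∀ β ∈ S.pos, 0 ≤ l β := by
      intro β hβ
      obtain ⟨c, hc, rfl⟩ := S.simple_gen β hβ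
      rw [map_sum]
      refine Finset.sum_nonneg fun α hα => ?_
      rw [map_smul, smul_eq_mul, hlΔ α hα]
      have := hc α hα
      split_ifs <;> simp [this]
    have hlI : ∀ α ∈ S.Δ, l α = 0 → α ∈ I := by
      intro α hα h
      by_contra hn
      rw [hlΔ α hα, if_neg hn] at h
      exact one_ne_zero h
    have hl0 : ∀ x ∈ Submodule.span ℤ (I : Set V), l x = 0 := by
      intro x hx
      induction hx using Submodule.span_induction with
      | mem x hx =>
        rw [hlΔ x (hI hx)]
        exact if_pos hx
      | zero => simp
      | add x y _ _ hx hy => simp [hx, hy]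
      | smul a x _ hx => rw [map_zsmul, hx, smul_zero]
    have hfix : ∀ x, l (w x) = l x := by
      have hwI' : w ∈ weyl (PhiI S I) := hwI
      clear hwI hw
      induction hwI' using Subgroup.closure_induction with
      | mem g hg =>
        obtain ⟨α, hα, rfl⟩ := hg
        intro x
        rw [aux_reflV_apply, map_sub, map_smul, hl0 α hα.2, smul_zero, sub_zero]
      | one => intro x; rfl
      | mul g h _ _ hg hh => intro x; rw [LinearEquiv.mul_apply, hg, hh]
      | inv g _ hg =>
        intro x
        have e : g (g⁻¹ x) = x := by
          rw [← LinearEquiv.mul_apply, mul_inv_cancel]; rfl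
        have := hg (g⁻¹ x)
        rw [e] at this
        exact this.symm
    obtain ⟨M, hM⟩ := aux_exists_base S Φ'
    obtain ⟨L, hL, rfl⟩ := aux_exists_word hsub hM ρ hρ w hw
    have hst := aux_stab hsub hM ρ hρ l hl L.length L rfl hL hfix
    refine Subgroup.closure_mono ?_ hst
    rintro g ⟨α, ⟨hα, h0⟩, rfl⟩
    exact ⟨α, ⟨aux_PhiI S I ρ hρ l hl hlI α (hsub.1 hα) h0, hα⟩, rfl⟩
  · refine le_inf (Subgroup.closure_mono ?_) (Subgroup.closure_mono ?_)
    · rintro g ⟨α, hα, rfl⟩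
      exact ⟨α, hα.1, rfl⟩
    · rintro g ⟨α, hα, rfl⟩
      exact ⟨α, hα.2, rfl⟩

end JantzenGVM
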